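/- Let 0 < θ < 1, 1 ≤ q ≤ 2 ≤ s ≤ ∞ and t ≥ q with 1/s = (1−θ)/q' + θ/2 (q' the conjugate exponent of q) and 1/t = 1/q − θ/2. There is an absolute constant c₀ such that for every n ∈ ℕ there exists a bounded linear operator T : ℓ_{q'}^{m} → ℓ_2^n with m = ⌊n^{s/2}⌋ and π_{p,q}(T) > 0 satisfying π_{p,q}^k(T) ≤ c₀ · √s · (k / n^{s/2})^{1/p − 1/t} · π_{p,q}(T) for all p with q ≤ p ≤ t and all k ∈ ℕ. -/

import Mathlib

open scoped ENNReal NNReal BigOperators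

noncomputable section

/-- The `ℓ_p`-sum `(∑ i, f i ^ p) ^ (1/p)` of a finite family in `ℝ≥0∞`,
with the usual sup-modification for `p = ∞`. -/
def eSum (p : ℝ≥0∞) {ι : Type*} [Fintype ι] (f : ι → ℝ≥0∞) : ℝ≥0∞ :=
  if p = ∞ then ⨆ i, f i else (∑ i, f i ^ p.toReal) ^ (1 / p.toReal)

/-- The weak `ℓ_q`-norm of a finite family of vectors:
`sup { (∑ k |⟨x_k, x*⟩|^q)^(1/q) : x* in the unit ball of the dual }`. -/
def weakLq (q : ℝ≥0∞) {X : Type*} [NormedAddCommGroup X] [NormedSpace ℝ X]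
    {n : ℕ} (x : Fin n → X) : ℝ≥0∞ :=
  ⨆ f : {f : X →L[ℝ] ℝ // ‖f‖ ≤ 1}, eSum q fun k => ENNReal.ofReal |f.1 (x k)|

/-- The `(p,q)`-summing norm of `T` with respect to `n` vectors. -/
def piN (p q : ℝ≥0∞) {X Y : Type*} [NormedAddCommGroup X] [NormedSpace ℝ X]
    [NormedAddCommGroup Y] [NormedSpace ℝ Y] (n : ℕ) (T : X →L[ℝ] Y) : ℝ≥0∞ :=
  ⨆ x : {x : Fin n → X // weakLq q x ≤ 1}, eSum p fun k => ENNReal.ofReal ‖T (x.1 k)‖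

/-- The `(p,q)`-summing norm of `T`. -/
def piPQ (p q : ℝ≥0∞) {X Y : Type*} [NormedAddCommGroup X] [NormedSpace ℝ X]
    [NormedAddCommGroup Y] [NormedSpace ℝ Y] (T : X →L[ℝ] Y) : ℝ≥0∞ :=
  ⨆ n : ℕ, piN p q n T

/-- `T` has rank at most `n`: its range is a finite-dimensional subspace of
dimension at most `n`. -/
def RankLE {X Y : Type*} [NormedAddCommGroup X] [NormedSpace ℝ X]
    [NormedAddCommGroup Y] [NormedSpace ℝ Y] (T : X →L[ℝ] Y) (n : ℕ) : Prop :=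
  FiniteDimensional ℝ (LinearMap.range (T : X →ₗ[ℝ] Y)) ∧
    Module.finrank ℝ (LinearMap.range (T : X →ₗ[ℝ] Y)) ≤ n

/-- The average of `‖∑ k, ε k • x k‖²` over all `2^n` sign choices `ε ∈ {-1,1}^n`. -/
def radAvg {X : Type*} [NormedAddCommGroup X] [NormedSpace ℝ X] {n : ℕ}
    (x : Fin n → X) : ℝ :=
  (∑ ε : Fin n → Bool, ‖∑ k, (if ε k then (1 : ℝ) else -1) • x k‖ ^ 2) / 2 ^ n

/-- The Rademacher cotype `q` constant of `T` with respect to `n` vectors. -/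
def cotypeN (q : ℝ) {X Y : Type*} [NormedAddCommGroup X] [NormedSpace ℝ X]
    [NormedAddCommGroup Y] [NormedSpace ℝ Y] (n : ℕ) (T : X →L[ℝ] Y) : ℝ≥0∞ :=
  ⨆ x : {x : Fin n → X // Real.sqrt (radAvg x) ≤ 1},
    (∑ k, ENNReal.ofReal ‖T (x.1 k)‖ ^ q) ^ (1 / q)

/-- The Rademacher cotype `q` constant of `T`. -/
def cotype (q : ℝ) {X Y : Type*} [NormedAddCommGroup X] [NormedSpace ℝ X]
    [NormedAddCommGroup Y] [NormedSpace ℝ Y] (T : X →L[ℝ] Y) : ℝ≥0∞ :=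
  ⨆ n : ℕ, cotypeN q n T

/-! The operator is the transpose `T = Aᵀ : ℓ_{q'}^m → ℓ_2^n` of a random `m × n` sign matrix `A`.
If `m ≤ n ^ (s / 2)`, then with positive probability `‖A : ℓ_2^n → ℓ_s^m‖ ≤ 10 √(s n)`: the
exponential moments of `∑ j, |(A y) j| ^ s` for a fixed `y` are small enough for a union bound over
a net of `5 ^ n` points. By duality `‖T z‖ ≤ 10 √(s n) ‖z‖_{s'}`.

Unit vectors give `π_{p,q}(T) ≥ m ^ (1 / p) √n`. In the other direction, the identity `ℓ_{q'}^m →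
ℓ_{s'}^m` has `(t,q)`-summing norm at most `m ^ (1 / t)`, a finite-dimensional form of the
Bennett–Carl inequalities, so `π_{t,q}(T) ≤ 10 √(s n) m ^ (1 / t)`. Hölder's inequality gives
`π_{p,q}^k(T) ≤ k ^ (1 / p - 1 / t) π_{t,q}^k(T)`, and dividing by the lower bound yields the claim.
-/

section RademacherSums

open MeasureTheory Real

lemma expect_prod_apply {ι α : Type*} [Fintype ι] [DecidableEq ι] [Fintype α]
    (f : ι → α → ℝ) :
    𝔼 x : ι → α, ∏ i, f i (x i) = ∏ i, 𝔼 a, f i a := by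
  simp only [Fintype.expect_eq_sum_div_card, Finset.prod_div_distrib, Fintype.prod_sum,
    Finset.prod_const, Finset.card_univ, Fintype.card_fun, Nat.cast_pow]

variable {ι : Type*} [Fintype ι]

/-- The Rademacher sum `∑ i, ε i * y i`, as a function of the signs `ε : ι → {1, -1}`. -/
def rademacherSum (y : ι → ℝ) (ε : ι → ℤˣ) : ℝ :=
  ∑ i, ((ε i : ℤ) : ℝ) * y i

lemma rademacherSum_smul (a : ℝ) (y : ι → ℝ) (ε : ι → ℤˣ) :
    rademacherSum (a • y) ε = a * rademacherSum y ε := by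
  simp only [rademacherSum, Pi.smul_apply, smul_eq_mul, Finset.mul_sum, mul_left_comm]

lemma rademacherSum_sq_le_card {y : ι → ℝ} (hy : ∑ i, y i ^ 2 ≤ 1) (ε : ι → ℤˣ) :
    rademacherSum y ε ^ 2 ≤ Fintype.card ι := by
  have sign_sq (i : ι) : (((ε i : ℤ) : ℝ)) ^ 2 = 1 := by
    rcases Int.units_eq_one_or (ε i) with h | h <;> simp [h]
  calc rademacherSum y ε ^ 2
      ≤ (∑ i, ((ε i : ℤ) : ℝ) ^ 2) * ∑ i, y i ^ 2 := Finset.sum_mul_sq_le_sq_mul_sq _ _ _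
    _ ≤ (∑ i, ((ε i : ℤ) : ℝ) ^ 2) * 1 := by gcongr
    _ = Fintype.card ι := by simp [sign_sq]

variable [DecidableEq ι]

lemma expect_exp_rademacherSum_le (y : ι → ℝ) :
    𝔼 ε, exp (rademacherSum y ε) ≤ exp ((∑ i, y i ^ 2) / 2) := by
  have expect_exp_sign (a : ℝ) : 𝔼 u : ℤˣ, exp (((u : ℤ) : ℝ) * a) = cosh a := by
    rw [Fintype.expect_eq_sum_div_card]
    simp [cosh_eq, UnitsInt.univ]
  calc 𝔼 ε, exp (rademacherSum y ε)
      = ∏ i, cosh (y i) := by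
        simp only [rademacherSum, exp_sum,
          expect_prod_apply fun i (u : ℤˣ) => exp (((u : ℤ) : ℝ) * y i), expect_exp_sign]
    _ ≤ ∏ i, exp (y i ^ 2 / 2) :=
        Finset.prod_le_prod (fun i _ => (cosh_pos _).le) fun i _ => cosh_le_exp_half_sq _
    _ = exp ((∑ i, y i ^ 2) / 2) := by rw [← exp_sum, Finset.sum_div]

lemma integrable_exp_neg_sq_mul_exp (x : ℝ) :
    Integrable fun g : ℝ => exp (-g ^ 2) * exp (x * g) := by
  have h := ((integrable_exp_neg_mul_sq one_pos).comp_sub_right (x / 2)).mul_const (exp (x ^ 2 / 4))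
  refine h.congr (.of_forall fun g => ?_)
  simp only [← exp_add]
  ring_nf

lemma integral_exp_neg_sq_mul_exp (x : ℝ) :
    ∫ g : ℝ, exp (-g ^ 2) * exp (x * g) = √π * exp (x ^ 2 / 4) := by
  have complete_square (g : ℝ) :
      exp (-g ^ 2) * exp (x * g) = exp (-1 * (g - x / 2) ^ 2) * exp (x ^ 2 / 4) := by
    rw [← exp_add, ← exp_add]
    ring_nf
  simp_rw [complete_square]
  rw [integral_mul_const, integral_sub_right_eq_self fun g : ℝ => exp (-1 * g ^ 2),
    integral_gaussian, div_one]

/-- The Gaussian integral `exp (x ^ 2 / 4) = π ^ (-1 / 2) * ∫ g, exp (-g ^ 2) * exp (x * g)`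
linearizes the square, so that the moment generating function bound applies. -/
lemma expect_exp_sq_rademacherSum_le {y : ι → ℝ} (hy : ∑ i, y i ^ 2 ≤ 1) :
    𝔼 ε, exp (rademacherSum y ε ^ 2 / 4) ≤ √2 := by
  have mgf_le (g : ℝ) : 𝔼 ε, exp (rademacherSum y ε * g) ≤ exp (g ^ 2 / 2) := by
    calc 𝔼 ε, exp (rademacherSum y ε * g)
        = 𝔼 ε, exp (rademacherSum (g • y) ε) := by simp only [rademacherSum_smul, mul_comm]
      _ ≤ exp ((∑ i, (g • y) i ^ 2) / 2) := expect_exp_rademacherSum_le _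
      _ = exp (g ^ 2 * (∑ i, y i ^ 2) / 2) := by
          simp only [Pi.smul_apply, smul_eq_mul, mul_pow, Finset.mul_sum]
      _ ≤ exp (g ^ 2 / 2) := by gcongr; exact mul_le_of_le_one_right (sq_nonneg g) hy
  have exp_half (g : ℝ) : exp (-g ^ 2) * exp (g ^ 2 / 2) = exp (-(1 / 2) * g ^ 2) := by
    rw [← exp_add]
    ring_nf
  have integral_expect : √π * 𝔼 ε, exp (rademacherSum y ε ^ 2 / 4)
      = ∫ g : ℝ, exp (-g ^ 2) * 𝔼 ε, exp (rademacherSum y ε * g) := by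
    simp only [Fintype.expect_eq_sum_div_card, ← mul_div_assoc, Finset.mul_sum]
    rw [integral_div, integral_finsetSum _ fun ε _ => integrable_exp_neg_sq_mul_exp _]
    simp_rw [integral_exp_neg_sq_mul_exp]
  refine le_of_mul_le_mul_left ?_ (sqrt_pos.2 pi_pos)
  calc √π * 𝔼 ε, exp (rademacherSum y ε ^ 2 / 4)
      = ∫ g : ℝ, exp (-g ^ 2) * 𝔼 ε, exp (rademacherSum y ε * g) := integral_expect
    _ ≤ ∫ g : ℝ, exp (-g ^ 2) * exp (g ^ 2 / 2) := by
        refine integral_mono ?_ ?_ fun g => by dsimp only; gcongr; exact mgf_le g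
        · simp only [Fintype.expect_eq_sum_div_card, ← mul_div_assoc, Finset.mul_sum]
          exact (integrable_finsetSum _ fun ε _ => integrable_exp_neg_sq_mul_exp _).div_const _
        · simpa only [exp_half] using integrable_exp_neg_mul_sq one_half_pos
    _ = √π * √2 := by
        simp_rw [exp_half]
        rw [integral_gaussian, ← sqrt_mul pi_pos.le, one_div, div_inv_eq_mul]

lemma abs_rpow_le_mul_exp_sq {s : ℝ} (hs : 0 < s) (z : ℝ) :
    |z| ^ s ≤ (4 * s) ^ (s / 2) * exp (z ^ 2 / 8) := by
  calc |z| ^ s = (4 * s * (z ^ 2 / (4 * s))) ^ (s / 2) := by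
        rw [mul_div_cancel₀ _ (by positivity), ← sq_abs, ← rpow_natCast_mul (abs_nonneg z)]
        ring_nf
    _ ≤ (4 * s * exp (z ^ 2 / (4 * s))) ^ (s / 2) := by
        gcongr
        linarith [add_one_le_exp (z ^ 2 / (4 * s))]
    _ = (4 * s) ^ (s / 2) * exp (z ^ 2 / 8) := by
        rw [mul_rpow (by positivity) (exp_pos _).le, ← exp_mul]
        congr 2
        field_simp
        ring

/-- The scale at which `|rademacherSum y ε| ^ s` is exponentially integrable in `N` dimensions. -/
def momentScale (N : ℕ) (s : ℝ) : ℝ :=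
  (N : ℝ) ^ (1 - s / 2) / (√2 * (4 * s) ^ (s / 2))

section MomentScale

variable {N : ℕ} {s : ℝ}

lemma momentScale_pos (hN : 0 < N) (hs : 0 < s) : 0 < momentScale N s := by
  unfold momentScale
  positivity

lemma momentScale_mul_abs_rpow_le (hN : 0 < N) (hs : 2 ≤ s) {x : ℝ} (hx : x ^ 2 ≤ N) :
    momentScale N s * |x| ^ s ≤ x ^ 2 / 8 := by
  have eight_le : 8 ≤ √2 * (4 * s) ^ (s / 2) := by
    have self_le_rpow : 4 * s ≤ (4 * s) ^ (s / 2) :=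
      self_le_rpow_of_one_le (by linarith) (by linarith)
    have one_le_sqrt_two : (1 : ℝ) ≤ √2 := one_le_sqrt.2 one_le_two
    nlinarith
  have abs_rpow_le : |x| ^ s ≤ x ^ 2 * (N : ℝ) ^ (s / 2 - 1) := by
    rcases eq_or_ne x 0 with rfl | hx0
    · simp [zero_rpow (by linarith : s ≠ 0)]
    calc |x| ^ s = (x ^ 2) ^ (s / 2) := by
          rw [← sq_abs, ← rpow_natCast_mul (abs_nonneg x)]
          ring_nf
      _ = x ^ 2 * (x ^ 2) ^ (s / 2 - 1) := by
          rw [rpow_sub_one (by positivity), mul_div_cancel₀ _ (by positivity)]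
      _ ≤ x ^ 2 * (N : ℝ) ^ (s / 2 - 1) := by gcongr; linarith
  calc momentScale N s * |x| ^ s
      ≤ momentScale N s * (x ^ 2 * (N : ℝ) ^ (s / 2 - 1)) := by
        gcongr
        exact (momentScale_pos hN (by linarith)).le
    _ = x ^ 2 / (√2 * (4 * s) ^ (s / 2)) := by
        have cancel : (N : ℝ) ^ (1 - s / 2) * (N : ℝ) ^ (s / 2 - 1) = 1 := by
          rw [← rpow_add (by positivity)]
          simp
        rw [momentScale, div_mul_eq_mul_div, mul_left_comm, cancel, mul_one]
    _ ≤ x ^ 2 / 8 := by gcongr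

lemma exp_momentScale_mul_abs_rpow_le (hN : 0 < N) (hs : 2 ≤ s) {x : ℝ} (hx : x ^ 2 ≤ N) :
    exp (momentScale N s * |x| ^ s) ≤ 1 + (N : ℝ) ^ (1 - s / 2) / √2 * exp (x ^ 2 / 4) := by
  have hs0 : 0 < s := by linarith
  have hr := momentScale_pos hN hs0
  have exp_le (u : ℝ) : exp u ≤ 1 + u * exp u := by
    have h : exp u * (1 - u) ≤ exp u * exp (-u) := by gcongr; exact one_sub_le_exp_neg u
    rw [← exp_add, add_neg_cancel, exp_zero] at h
    linarith
  calc exp (momentScale N s * |x| ^ s)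
      ≤ 1 + momentScale N s * |x| ^ s * exp (momentScale N s * |x| ^ s) := exp_le _
    _ ≤ 1 + momentScale N s * ((4 * s) ^ (s / 2) * exp (x ^ 2 / 8)) * exp (x ^ 2 / 8) := by
        gcongr
        · exact abs_rpow_le_mul_exp_sq hs0 x
        · exact momentScale_mul_abs_rpow_le hN hs hx
    _ = 1 + (N : ℝ) ^ (1 - s / 2) / √2 * exp (x ^ 2 / 4) := by
        have exp_quarter : exp (x ^ 2 / 4) = exp (x ^ 2 / 8) * exp (x ^ 2 / 8) := by
          rw [← exp_add]
          ring_nf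
        rw [momentScale, exp_quarter]
        field_simp

end MomentScale

lemma expect_exp_abs_rademacherSum_rpow_le [Nonempty ι] {s : ℝ} (hs : 2 ≤ s) {y : ι → ℝ}
    (hy : ∑ i, y i ^ 2 ≤ 1) :
    𝔼 ε, exp (momentScale (Fintype.card ι) s * |rademacherSum y ε| ^ s) ≤
      1 + (Fintype.card ι : ℝ) ^ (1 - s / 2) := by
  set N := Fintype.card ι
  calc 𝔼 ε, exp (momentScale N s * |rademacherSum y ε| ^ s)
      ≤ 𝔼 ε, (1 + (N : ℝ) ^ (1 - s / 2) / √2 * exp (rademacherSum y ε ^ 2 / 4)) :=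
        Finset.expect_le_expect fun ε _ => exp_momentScale_mul_abs_rpow_le Fintype.card_pos hs
          (rademacherSum_sq_le_card hy ε)
    _ = 1 + (N : ℝ) ^ (1 - s / 2) / √2 * 𝔼 ε, exp (rademacherSum y ε ^ 2 / 4) := by
        rw [Finset.expect_add_distrib, Fintype.expect_const, ← Finset.mul_expect]
    _ ≤ 1 + (N : ℝ) ^ (1 - s / 2) / √2 * √2 := by
        gcongr
        exact expect_exp_sq_rademacherSum_le hy
    _ = 1 + (N : ℝ) ^ (1 - s / 2) := by rw [div_mul_cancel₀ _ (by positivity)]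

variable {κ : Type*} [Fintype κ] [DecidableEq κ]

lemma expect_exp_sum_abs_rademacherSum_rpow_le [Nonempty ι] {s : ℝ} (hs : 2 ≤ s)
    (hκ : (Fintype.card κ : ℝ) ≤ (Fintype.card ι : ℝ) ^ (s / 2)) {y : ι → ℝ}
    (hy : ∑ i, y i ^ 2 ≤ 1) :
    𝔼 V : κ → ι → ℤˣ,
        exp (momentScale (Fintype.card ι) s * ∑ j, |rademacherSum y (V j)| ^ s) ≤
      exp (Fintype.card ι) := by
  set N := Fintype.card ι
  have hN : (0 : ℝ) < N := Nat.cast_pos.2 Fintype.card_pos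
  calc 𝔼 V : κ → ι → ℤˣ, exp (momentScale N s * ∑ j, |rademacherSum y (V j)| ^ s)
      = (𝔼 ε, exp (momentScale N s * |rademacherSum y ε| ^ s)) ^ Fintype.card κ := by
        simp only [Finset.mul_sum, exp_sum]
        rw [expect_prod_apply fun (_ : κ) ε => exp (momentScale N s * |rademacherSum y ε| ^ s),
          Finset.prod_const, Finset.card_univ]
    _ ≤ exp ((N : ℝ) ^ (1 - s / 2)) ^ Fintype.card κ := by
        refine pow_le_pow_left₀ (Finset.expect_nonneg fun ε _ => (exp_pos _).le) ?_ _
        linarith [expect_exp_abs_rademacherSum_rpow_le hs hy,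
          add_one_le_exp ((N : ℝ) ^ (1 - s / 2))]
    _ = exp (Fintype.card κ * (N : ℝ) ^ (1 - s / 2)) := (exp_nat_mul _ _).symm
    _ ≤ exp ((N : ℝ) ^ (s / 2) * (N : ℝ) ^ (1 - s / 2)) := by gcongr
    _ = exp N := by
        rw [← rpow_add hN, add_sub_cancel, rpow_one]

lemma three_mul_card_div_momentScale_le {N : ℕ} (hN : 0 < N) {s : ℝ} (hs : 2 ≤ s) :
    3 * N / momentScale N s ≤ (5 * √(s * N)) ^ s := by
  have hs0 : 0 < s := by linarith
  have hN' : (0 : ℝ) < N := Nat.cast_pos.2 hN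
  have sqrt_rpow : √(s * N) ^ s = s ^ (s / 2) * (N : ℝ) ^ (s / 2) := by
    rw [sqrt_eq_rpow, ← rpow_mul (by positivity), one_div_mul_eq_div,
      mul_rpow hs0.le hN'.le]
  have constants : 3 * √2 * 4 ^ (s / 2) ≤ (5 : ℝ) ^ s := by
    have sqrt_two_le : √2 ≤ 2 := by rw [sqrt_le_left zero_le_two]; norm_num
    have rpow_two_le : (5 / 2 : ℝ) ^ (2 : ℝ) ≤ (5 / 2) ^ s := by gcongr; norm_num
    have five_rpow : (5 : ℝ) ^ s = (5 / 2) ^ s * 2 ^ s := by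
      rw [← mul_rpow (by norm_num) zero_le_two]
      norm_num
    have four_rpow : (4 : ℝ) ^ (s / 2) = 2 ^ s := by
      rw [show (4 : ℝ) = 2 ^ (2 : ℝ) by norm_num, ← rpow_mul zero_le_two]
      ring_nf
    rw [five_rpow, four_rpow]
    gcongr
    norm_num at rpow_two_le
    linarith
  calc 3 * N / momentScale N s
      = 3 * √2 * 4 ^ (s / 2) * (s ^ (s / 2) * (N : ℝ) ^ (s / 2)) := by
        rw [momentScale, rpow_sub hN', rpow_one, mul_rpow zero_le_four hs0.le]
        field_simp
    _ ≤ 5 ^ s * (s ^ (s / 2) * (N : ℝ) ^ (s / 2)) := by gcongr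
    _ = (5 * √(s * N)) ^ s := by rw [mul_rpow (by norm_num) (sqrt_nonneg _), sqrt_rpow]

end RademacherSums

section Nets

open Metric Module

variable {E F : Type*} [NormedAddCommGroup E] [NormedSpace ℝ E] [NormedAddCommGroup F]
  [NormedSpace ℝ F]

lemma packingNumber_one_closedBall_two_le [FiniteDimensional ℝ E] :
    packingNumber 1 (closedBall (0 : E) 2) ≤ (5 ^ finrank ℝ E : ℕ) := by
  refine iSup₂_le fun C hC => iSup_le fun hsep => ?_
  by_contra! hcard
  obtain ⟨C', hC', hcard'⟩ := Set.exists_subset_encard_eq (Order.add_one_le_of_lt hcard)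
  have hfin : C'.Finite := Set.finite_of_encard_eq_coe (mod_cast hcard')
  have hle := Besicovitch.card_le_of_separated hfin.toFinset
    (fun c hc => mem_closedBall_zero_iff.1 (hC (hC' (hfin.mem_toFinset.1 hc))))
    (fun c hc d hd hcd => by
      have h : ↑(1 : ℝ≥0) < edist c d :=
        hsep (hC' (hfin.mem_toFinset.1 hc)) (hC' (hfin.mem_toFinset.1 hd)) hcd
      rw [edist_dist, ENNReal.coe_one, ENNReal.one_lt_ofReal, dist_eq_norm] at h
      exact h.le)
  rw [hfin.encard_eq_coe_toFinset_card] at hcard'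
  norm_cast at hcard'
  omega

lemma exists_finset_isCover_closedBall_two [FiniteDimensional ℝ E] :
    ∃ S : Finset E, S.card ≤ 5 ^ finrank ℝ E ∧ (∀ c ∈ S, ‖c‖ ≤ 2) ∧
      IsCover 1 (closedBall (0 : E) 2) S := by
  have hpack := packingNumber_one_closedBall_two_le (E := E)
  have hne_top : packingNumber 1 (closedBall (0 : E) 2) ≠ ⊤ := ne_top_of_le_ne_top (by simp) hpack
  rw [← encard_maximalSeparatedSet hne_top, Set.encard_le_coe_iff_finite_ncard_le] at hpack
  obtain ⟨hfin, hcard⟩ := hpack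
  refine ⟨hfin.toFinset, by rwa [← Set.ncard_eq_toFinset_card _ hfin], fun c hc => ?_, ?_⟩
  · exact mem_closedBall_zero_iff.1 (maximalSeparatedSet_subset (hfin.mem_toFinset.1 hc))
  · rw [hfin.coe_toFinset]
    exact isCover_maximalSeparatedSet hne_top

lemma opNorm_le_of_isCover_closedBall_two (L : E →L[ℝ] F) {S : Set E} {B : ℝ} (hB : 0 ≤ B)
    (hS : IsCover 1 (closedBall (0 : E) 2) S) (hL : ∀ c ∈ S, ‖L c‖ ≤ B) : ‖L‖ ≤ B := by
  suffices ‖L‖ ≤ (B + ‖L‖) / 2 by linarith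
  refine L.opNorm_le_of_unit_norm (by positivity) fun x hx => ?_
  obtain ⟨c, hc, hxc⟩ := hS (x := (2 : ℝ) • x) (by simp [norm_smul, hx])
  replace hxc : edist ((2 : ℝ) • x) c ≤ (1 : ℝ≥0) := hxc
  rw [edist_dist, ENNReal.coe_one, ENNReal.ofReal_le_one, dist_eq_norm] at hxc
  have double : 2 * ‖L x‖ ≤ B + ‖L‖ := by
    calc 2 * ‖L x‖ = ‖L c + L ((2 : ℝ) • x - c)‖ := by
          rw [← map_add, add_sub_cancel, map_smul, norm_smul, Real.norm_two]
      _ ≤ ‖L c‖ + ‖L ((2 : ℝ) • x - c)‖ := norm_add_le _ _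
      _ ≤ B + ‖L‖ * 1 := add_le_add (hL c hc) (L.le_opNorm_of_le hxc)
      _ = B + ‖L‖ := by rw [mul_one]
  linarith

end Nets

/-- The operator `ℓ_p^ι → ℓ_q^κ` whose matrix in the unit vector bases is `A`. -/
def lpOperator (p q : ℝ≥0∞) [Fact (1 ≤ p)] [Fact (1 ≤ q)] {ι κ : Type*} [Fintype ι] [DecidableEq ι]
    [Fintype κ] (A : Matrix κ ι ℝ) : PiLp p (fun _ : ι => ℝ) →L[ℝ] PiLp q (fun _ : κ => ℝ) :=
  LinearMap.toContinuousLinearMap (Matrix.toLpLin p q A)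

lemma lpOperator_apply (p q : ℝ≥0∞) [Fact (1 ≤ p)] [Fact (1 ≤ q)] {ι κ : Type*} [Fintype ι]
    [DecidableEq ι] [Fintype κ] (A : Matrix κ ι ℝ) (x : PiLp p fun _ : ι => ℝ) (j : κ) :
    lpOperator p q A x j = ∑ i, A j i * x i := rfl

section RandomSigns

open Real

variable {ι κ : Type*} [Fintype ι] [Fintype κ]

lemma exists_signs_forall_sum_abs_rademacherSum_rpow_le [Nonempty ι] {s : ℝ} (hs : 2 ≤ s)
    (hκ : (Fintype.card κ : ℝ) ≤ (Fintype.card ι : ℝ) ^ (s / 2)) {S : Finset (ι → ℝ)}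
    (hS : ∀ y ∈ S, ∑ i, y i ^ 2 ≤ 1) (hS_card : S.card ≤ 5 ^ Fintype.card ι) :
    ∃ V : κ → ι → ℤˣ, ∀ y ∈ S,
      ∑ j, |rademacherSum y (V j)| ^ s ≤ (5 * √(s * Fintype.card ι)) ^ s := by
  classical
  set N := Fintype.card ι
  have hN : 0 < N := Fintype.card_pos
  have hr := momentScale_pos hN (by linarith : 0 < s)
  set r := momentScale N s
  have expect_sum_le : 𝔼 V : κ → ι → ℤˣ, ∑ y ∈ S, exp (r * ∑ j, |rademacherSum y (V j)| ^ s) ≤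
      5 ^ N * exp N := by
    rw [Finset.expect_sum_comm]
    calc ∑ y ∈ S, 𝔼 V : κ → ι → ℤˣ, exp (r * ∑ j, |rademacherSum y (V j)| ^ s)
        ≤ ∑ _ ∈ S, exp N :=
          Finset.sum_le_sum fun y hy => expect_exp_sum_abs_rademacherSum_rpow_le hs hκ (hS y hy)
      _ = S.card * exp N := by rw [Finset.sum_const, nsmul_eq_mul]
      _ ≤ 5 ^ N * exp N := by gcongr; exact_mod_cast hS_card
  have five_le_exp : (5 : ℝ) ≤ exp 2 := by
    have h := exp_one_gt_d9
    rw [show (2 : ℝ) = 1 + 1 by norm_num, exp_add]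
    nlinarith
  have pow_five_mul_exp_le : 5 ^ N * exp N ≤ exp (3 * N) := by
    calc (5 : ℝ) ^ N * exp N ≤ exp 2 ^ N * exp N := by gcongr
      _ = exp (3 * N) := by rw [← exp_nat_mul, ← exp_add]; ring_nf
  obtain ⟨V, -, hV⟩ := Finset.exists_le_of_expect_le Finset.univ_nonempty expect_sum_le
  refine ⟨V, fun y hy => le_trans ?_ (three_mul_card_div_momentScale_le hN hs)⟩
  rw [le_div_iff₀' hr, ← exp_le_exp]
  calc exp (r * ∑ j, |rademacherSum y (V j)| ^ s)
      ≤ ∑ y ∈ S, exp (r * ∑ j, |rademacherSum y (V j)| ^ s) :=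
        Finset.single_le_sum (f := fun y => exp (r * ∑ j, |rademacherSum y (V j)| ^ s))
          (fun y _ => (exp_pos _).le) hy
    _ ≤ 5 ^ N * exp N := hV
    _ ≤ exp (3 * N) := pow_five_mul_exp_le

lemma exists_sign_matrix_norm_lpOperator_le [DecidableEq ι] [Nonempty ι] {s : ℝ}
    [Fact (1 ≤ ENNReal.ofReal s)] (hs : 2 ≤ s)
    (hκ : (Fintype.card κ : ℝ) ≤ (Fintype.card ι : ℝ) ^ (s / 2)) :
    ∃ A : Matrix κ ι ℝ, (∀ j i, |A j i| = 1) ∧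
      ‖lpOperator 2 (ENNReal.ofReal s) A‖ ≤ 10 * √(s * Fintype.card ι) := by
  have hs0 : 0 < s := by linarith
  have hs_toReal := ENNReal.toReal_ofReal hs0.le
  obtain ⟨S, hS_card, hS_norm, hS_cover⟩ :=
    exists_finset_isCover_closedBall_two (E := EuclideanSpace ℝ ι)
  let halve (c : EuclideanSpace ℝ ι) : ι → ℝ := fun i => c i / 2
  have halve_sq_sum (c : EuclideanSpace ℝ ι) (hc : c ∈ S) : ∑ i, halve c i ^ 2 ≤ 1 := by
    have h := EuclideanSpace.real_norm_sq_eq c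
    simp only [halve, div_pow, ← Finset.sum_div, ← h]
    nlinarith [hS_norm c hc, norm_nonneg c]
  obtain ⟨V, hV⟩ := exists_signs_forall_sum_abs_rademacherSum_rpow_le (κ := κ) hs hκ
    (S := S.image halve) (by simpa using halve_sq_sum)
    (Finset.card_image_le.trans (by simpa using hS_card))
  refine ⟨.of fun j i => ((V j i : ℤ) : ℝ), fun j i => ?_, ?_⟩
  · rcases Int.units_eq_one_or (V j i) with h | h <;> simp [h]
  refine opNorm_le_of_isCover_closedBall_two _ (by positivity) hS_cover fun c hc => ?_
  have row_eq (j : κ) : ‖lpOperator 2 (ENNReal.ofReal s) (.of fun j i => ((V j i : ℤ) : ℝ)) c j‖ =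
      2 * |rademacherSum (halve c) (V j)| := by
    rw [lpOperator_apply, norm_eq_abs, ← abs_two, ← abs_mul, rademacherSum, Finset.mul_sum]
    simp only [halve, Matrix.of_apply]
    ring_nf
  rw [PiLp.norm_eq_sum (by rwa [hs_toReal]), hs_toReal]
  simp only [row_eq, mul_rpow zero_le_two (abs_nonneg _), ← Finset.mul_sum]
  calc (2 ^ s * ∑ j, |rademacherSum (halve c) (V j)| ^ s) ^ (1 / s)
      ≤ (2 ^ s * (5 * √(s * Fintype.card ι)) ^ s) ^ (1 / s) := by
        gcongr
        exact hV _ (Finset.mem_image_of_mem _ hc)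
    _ = 10 * √(s * Fintype.card ι) := by
        rw [← mul_rpow zero_le_two (by positivity), one_div, rpow_rpow_inv (by positivity) hs0.ne']
        ring

end RandomSigns

section SumRpow

open Real

variable {ι : Type*}

lemma sum_rpow_mul_rpow_le (S : Finset ι) {f g : ι → ℝ} (hf : ∀ i, 0 ≤ f i) (hg : ∀ i, 0 ≤ g i)
    {a b : ℝ} (ha : 0 ≤ a) (hb : 0 ≤ b) (hab : a + b = 1) :
    ∑ i ∈ S, f i ^ a * g i ^ b ≤ (∑ i ∈ S, f i) ^ a * (∑ i ∈ S, g i) ^ b := by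
  rcases ha.eq_or_lt with rfl | ha
  · obtain rfl : b = 1 := by linarith
    simp
  rcases hb.eq_or_lt with rfl | hb
  · obtain rfl : a = 1 := by linarith
    simp
  have h := inner_le_Lp_mul_Lq_of_nonneg S (HolderConjugate.inv_inv ha hb hab)
    (fun i _ => rpow_nonneg (hf i) a) (fun i _ => rpow_nonneg (hg i) b)
  simpa only [rpow_rpow_inv (hf _) ha.ne', rpow_rpow_inv (hg _) hb.ne', one_div, inv_inv] using h

variable [Fintype ι]

lemma rpow_sum_rpow_le_card_rpow_mul {p t : ℝ} (hp : 0 < p) (hpt : p ≤ t) {a : ι → ℝ}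
    (ha : ∀ i, 0 ≤ a i) :
    (∑ i, a i ^ p) ^ (1 / p) ≤
      (Fintype.card ι : ℝ) ^ (1 / p - 1 / t) * (∑ i, a i ^ t) ^ (1 / t) := by
  have ht : 0 < t := hp.trans_le hpt
  have hat (i : ι) : 0 ≤ a i ^ t := rpow_nonneg (ha i) t
  have hsum : 0 ≤ ∑ i, a i ^ t := Finset.sum_nonneg fun i _ => hat i
  have holder := sum_rpow_mul_rpow_le Finset.univ (f := 1) (fun _ => zero_le_one) hat
    (a := 1 - p / t) (b := p / t) (sub_nonneg.2 ((div_le_one ht).2 hpt)) (by positivity) (by ring)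
  simp only [Pi.one_apply, one_rpow, one_mul, ← rpow_mul (ha _), mul_div_cancel₀ _ ht.ne',
    Finset.sum_const, Finset.card_univ, nsmul_eq_mul, mul_one] at holder
  calc (∑ i, a i ^ p) ^ (1 / p)
      ≤ ((Fintype.card ι : ℝ) ^ (1 - p / t) * (∑ i, a i ^ t) ^ (p / t)) ^ (1 / p) :=
        rpow_le_rpow (Finset.sum_nonneg fun i _ => rpow_nonneg (ha i) p) holder (by positivity)
    _ = (Fintype.card ι : ℝ) ^ (1 / p - 1 / t) * (∑ i, a i ^ t) ^ (1 / t) := by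
        rw [mul_rpow (by positivity) (by positivity), ← rpow_mul (by positivity), ← rpow_mul hsum]
        congr 2 <;> field_simp

lemma sum_abs_rpow_le_rpow_mul_rpow {p q r θ : ℝ} (hp : 0 < p) (hq : 0 < q) (hr : 0 < r)
    (hθ0 : 0 ≤ θ) (hθ1 : θ ≤ 1) (h : 1 / r = (1 - θ) / p + θ / q) (f : ι → ℝ) :
    ∑ i, |f i| ^ r ≤
      (∑ i, |f i| ^ p) ^ (r * (1 - θ) / p) * (∑ i, |f i| ^ q) ^ (r * θ / q) := by
  have : 0 ≤ 1 - θ := sub_nonneg.2 hθ1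
  refine le_of_eq_of_le (Finset.sum_congr rfl fun i _ => ?_)
    (sum_rpow_mul_rpow_le Finset.univ (fun i => rpow_nonneg (abs_nonneg (f i)) p)
      (fun i => rpow_nonneg (abs_nonneg (f i)) q) (by positivity) (by positivity) ?_)
  · rw [← rpow_mul (abs_nonneg _), ← rpow_mul (abs_nonneg _), mul_div_cancel₀ _ hp.ne',
      mul_div_cancel₀ _ hq.ne', ← rpow_add_of_nonneg (abs_nonneg _) (by positivity) (by positivity),
      ← mul_add, sub_add_cancel, mul_one]
  · rw [mul_div_assoc, mul_div_assoc, ← mul_add, ← h, mul_one_div_cancel hr.ne']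

lemma rpow_sum_abs_rpow_le_rpow_mul_rpow {q θ σ t : ℝ} (hq1 : 1 ≤ q) (hθ0 : 0 ≤ θ) (hθ1 : θ ≤ 1)
    (hσ : 0 < σ) (hσθ : 1 / σ = (1 - θ) / q + θ / 2) (ht : 0 < t) (htθ : 1 / t = 1 / q - θ / 2)
    (f : ι → ℝ) :
    (∑ i, |f i| ^ σ) ^ (t / σ) ≤
      (∑ i, |f i| ^ q) ^ (σ * (1 - θ) / q) *
        ((((∑ i, |f i| ^ σ) ^ (t / σ)) ^ (1 - 1 / q)) ^ 2 * ∑ i, |f i| ^ (2 : ℝ)) ^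
          (σ * θ / 2) := by
  have hq0 : 0 < q := by linarith
  have hq_inv : 0 ≤ 1 - 1 / q := sub_nonneg.2 ((div_le_one hq0).2 hq1)
  have exponent_eq : t / σ = 1 + t / σ * (1 - 1 / q) * 2 * (σ * θ / 2) := by
    have ht_eq : t * (1 / q - θ / 2) = 1 := by rw [← htθ, mul_one_div_cancel ht.ne']
    have cancel : t / σ * (1 - 1 / q) * 2 * (σ * θ / 2) = t * θ * (1 - 1 / q) := by field_simp
    rw [cancel, div_eq_mul_one_div, hσθ]
    linear_combination ht_eq
  set r := ∑ i, |f i| ^ σ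
  have hr : 0 ≤ r := Finset.sum_nonneg fun i _ => by positivity
  calc r ^ (t / σ) = r * (((r ^ (t / σ)) ^ (1 - 1 / q)) ^ 2) ^ (σ * θ / 2) := by
        rw [← rpow_two, ← rpow_mul hr, ← rpow_mul hr, ← rpow_mul hr]
        nth_rewrite 2 [← rpow_one r]
        rw [← rpow_add_of_nonneg hr zero_le_one (by positivity), ← exponent_eq]
    _ ≤ (∑ i, |f i| ^ q) ^ (σ * (1 - θ) / q) * (∑ i, |f i| ^ (2 : ℝ)) ^ (σ * θ / 2) *
          (((r ^ (t / σ)) ^ (1 - 1 / q)) ^ 2) ^ (σ * θ / 2) := by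
        gcongr
        exact sum_abs_rpow_le_rpow_mul_rpow hq0 two_pos hσ hθ0 hθ1 hσθ f
    _ = _ := by
        rw [mul_rpow (sq_nonneg _) (by positivity)]
        ring

lemma le_of_le_rpow_mul_rpow_one_sub {x y e : ℝ} (hx : 0 ≤ x) (hy : 0 ≤ y) (he : 0 < e)
    (h : x ≤ y ^ e * x ^ (1 - e)) : x ≤ y := by
  rcases hx.eq_or_lt with rfl | hx
  · exact hy
  refine (rpow_le_rpow_iff hx.le hy he).1 (le_of_mul_le_mul_right ?_ (rpow_pos_of_pos hx (1 - e)))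
  rwa [← rpow_add hx, add_sub_cancel, rpow_one]

end SumRpow

lemma exists_signs_sum_sq_norm_le {κ E : Type*} [NormedAddCommGroup E] [InnerProductSpace ℝ E]
    (S : Finset κ) (u : κ → E) :
    ∃ η : κ → ℝ, (∀ k, |η k| = 1) ∧ ∑ k ∈ S, ‖u k‖ ^ 2 ≤ ‖∑ k ∈ S, η k • u k‖ ^ 2 := by
  classical
  induction S using Finset.induction_on with
  | empty => exact ⟨1, by simp, by simp⟩
  | insert a S ha ih =>
    obtain ⟨η, hη, hS⟩ := ih
    set w := ∑ k ∈ S, η k • u k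
    obtain ⟨δ, hδ, hinner⟩ : ∃ δ : ℝ, |δ| = 1 ∧ 0 ≤ inner ℝ (δ • u a) w := by
      rcases le_total 0 (inner ℝ (u a) w) with h | h
      · exact ⟨1, abs_one, by simpa using h⟩
      · exact ⟨-1, by simp, by simpa using h⟩
    refine ⟨Function.update η a δ, fun k => ?_, ?_⟩
    · rcases eq_or_ne k a with rfl | hk
      · simpa using hδ
      · simpa [hk] using hη k
    · have sum_eq : ∑ k ∈ S, Function.update η a δ k • u k = w :=
        Finset.sum_congr rfl fun k hk => by
          rw [Function.update_of_ne (ne_of_mem_of_not_mem hk ha)]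
      rw [Finset.sum_insert ha, Finset.sum_insert ha, Function.update_self, sum_eq,
        norm_add_sq_real, norm_smul, Real.norm_eq_abs, hδ, one_mul]
      linarith

section LpContraction

open Matrix Real

variable {ι κ : Type*} [Fintype ι] [Fintype κ] {X : Matrix κ ι ℝ} {q : ℝ}

/-- The matrix `X` acts as a contraction `ℓ_q^ι → ℓ_q^κ`. For `1 ≤ q`, this says that the rows of
`X` form a family of vectors in `ℓ_{q'}^ι` with weak `ℓ_q`-norm at most one. -/
def IsLpContraction (q : ℝ) (X : Matrix κ ι ℝ) : Prop :=
  ∀ f : ι → ℝ, ∑ k, |(X *ᵥ f) k| ^ q ≤ ∑ j, |f j| ^ q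

lemma isLpContraction_one [DecidableEq ι] (q : ℝ) : IsLpContraction q (1 : Matrix ι ι ℝ) :=
  fun f => by rw [one_mulVec]

namespace IsLpContraction

lemma sum_abs_col_rpow_le_one (hX : IsLpContraction q X) (hq : q ≠ 0) (j : ι) :
    ∑ k, |X k j| ^ q ≤ 1 := by
  classical
  simpa [mulVec_single_one, Pi.single_apply, apply_ite, ite_pow, zero_rpow hq] using
    hX (Pi.single j 1)

lemma sum_sum_abs_rpow_le_card (hX : IsLpContraction q X) (hq : q ≠ 0) :
    ∑ k, ∑ j, |X k j| ^ q ≤ Fintype.card ι := by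
  rw [Finset.sum_comm]
  simpa using Finset.sum_le_sum fun j (_ : j ∈ Finset.univ) => hX.sum_abs_col_rpow_le_one hq j

lemma sum_weight_mul_abs_mulVec_le (hX : IsLpContraction q X) (hq1 : 1 ≤ q) (hq2 : q ≤ 2)
    {d : κ → ℝ} (hd : ∀ k, 0 ≤ d k) (w : EuclideanSpace ℝ ι) :
    ∑ k, d k ^ (1 - 1 / q) * |(X *ᵥ w) k| ≤
      (∑ k, d k) ^ (1 - 1 / q) * (Fintype.card ι : ℝ) ^ (1 / q - 1 / 2) * ‖w‖ := by
  have hq0 : 0 < q := by linarith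
  have hq_inv : 0 ≤ 1 - 1 / q := sub_nonneg.2 ((div_le_one hq0).2 hq1)
  have hd_sum : 0 ≤ ∑ k, d k := Finset.sum_nonneg fun k _ => hd k
  calc ∑ k, d k ^ (1 - 1 / q) * |(X *ᵥ w) k|
      = ∑ k, d k ^ (1 - 1 / q) * (|(X *ᵥ w) k| ^ q) ^ (1 / q) := by
        simp only [one_div, rpow_rpow_inv (abs_nonneg _) hq0.ne']
    _ ≤ (∑ k, d k) ^ (1 - 1 / q) * (∑ k, |(X *ᵥ w) k| ^ q) ^ (1 / q) :=
        sum_rpow_mul_rpow_le _ hd (fun k => by positivity) hq_inv (by positivity) (by ring)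
    _ ≤ (∑ k, d k) ^ (1 - 1 / q) * (∑ j, |w j| ^ q) ^ (1 / q) := by
        gcongr
        exact hX w
    _ ≤ (∑ k, d k) ^ (1 - 1 / q) *
          ((Fintype.card ι : ℝ) ^ (1 / q - 1 / 2) * (∑ j, |w j| ^ (2 : ℝ)) ^ (1 / 2 : ℝ)) := by
        gcongr
        exact rpow_sum_rpow_le_card_rpow_mul hq0 hq2 fun j => abs_nonneg (w j)
    _ = _ := by
        rw [EuclideanSpace.norm_eq, sqrt_eq_rpow]
        simp only [norm_eq_abs, rpow_two, mul_assoc]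

lemma sum_weight_sq_mul_sum_sq_le (hX : IsLpContraction q X) (hq1 : 1 ≤ q) (hq2 : q ≤ 2)
    {d : κ → ℝ} (hd : ∀ k, 0 ≤ d k) :
    ∑ k, (d k ^ (1 - 1 / q)) ^ 2 * ∑ j, |X k j| ^ (2 : ℝ) ≤
      ((∑ k, d k) ^ (1 - 1 / q) * (Fintype.card ι : ℝ) ^ (1 / q - 1 / 2)) ^ 2 := by
  have hd_sum : 0 ≤ ∑ k, d k := Finset.sum_nonneg fun k _ => hd k
  set c : κ → ℝ := fun k => d k ^ (1 - 1 / q)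
  have hc (k : κ) : 0 ≤ c k := rpow_nonneg (hd k) _
  let row (k : κ) : EuclideanSpace ℝ ι := WithLp.toLp 2 (X k)
  obtain ⟨η, hη, hle⟩ := exists_signs_sum_sq_norm_le Finset.univ fun k => c k • row k
  set w := ∑ k, η k • c k • row k with hw
  have inner_row (k : κ) : inner ℝ w (row k) = (X *ᵥ w) k := by
    simp [row, PiLp.inner_apply, mulVec, dotProduct]
  have sq_norm_le : ‖w‖ ^ 2 ≤ ∑ k, c k * |(X *ᵥ w) k| := by
    rw [← real_inner_self_eq_norm_sq]
    nth_rewrite 2 [hw]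
    simp only [inner_sum, real_inner_smul_right, inner_row]
    refine Finset.sum_le_sum fun k _ => (le_abs_self _).trans ?_
    rw [abs_mul, hη, one_mul, abs_mul, abs_of_nonneg (hc k)]
  have norm_le : ‖w‖ ≤ (∑ k, d k) ^ (1 - 1 / q) * (Fintype.card ι : ℝ) ^ (1 / q - 1 / 2) := by
    rcases (norm_nonneg w).eq_or_lt with h | h
    · rw [← h]
      positivity
    · refine le_of_mul_le_mul_right ?_ h
      rw [← sq]
      exact sq_norm_le.trans (hX.sum_weight_mul_abs_mulVec_le hq1 hq2 hd w)
  calc ∑ k, c k ^ 2 * ∑ j, |X k j| ^ (2 : ℝ)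
      = ∑ k, ‖c k • row k‖ ^ 2 := by
        simp [row, norm_smul, mul_pow, EuclideanSpace.real_norm_sq_eq]
    _ ≤ ‖w‖ ^ 2 := hle
    _ ≤ _ := pow_le_pow_left₀ (norm_nonneg w) norm_le 2

/-- Interpolation between `σ = q` (column sums) and `σ = 2` (the weighted bound). Taking the
summands `d k` themselves as weights makes the estimate self-improving: their sum `S` satisfies
`S ≤ m ^ e * S ^ (1 - e)` with `e = σ / t`. -/
theorem sum_rpow_sum_abs_rpow_le_card (hX : IsLpContraction q X) (hq1 : 1 ≤ q) (hq2 : q ≤ 2)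
    {θ σ t : ℝ} (hθ0 : 0 ≤ θ) (hθ1 : θ ≤ 1) (hσ : 0 < σ) (hσθ : 1 / σ = (1 - θ) / q + θ / 2)
    (ht : 0 < t) (htθ : 1 / t = 1 / q - θ / 2) :
    ∑ k, (∑ j, |X k j| ^ σ) ^ (t / σ) ≤ Fintype.card ι := by
  have hq0 : 0 < q := by linarith
  have : 0 ≤ 1 - θ := sub_nonneg.2 hθ1
  let m : ℝ := Fintype.card ι
  let A (k : κ) : ℝ := ∑ j, |X k j| ^ q
  let d (k : κ) : ℝ := (∑ j, |X k j| ^ σ) ^ (t / σ)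
  let G (k : κ) : ℝ := (d k ^ (1 - 1 / q)) ^ 2 * ∑ j, |X k j| ^ (2 : ℝ)
  have hA (k : κ) : 0 ≤ A k := by positivity
  have hd (k : κ) : 0 ≤ d k := by positivity
  have hG (k : κ) : 0 ≤ G k := by positivity
  have hS : 0 ≤ ∑ k, d k := Finset.sum_nonneg fun k _ => hd k
  have exponents_add : σ * (1 - θ) / q + σ * θ / 2 = 1 := by
    rw [mul_div_assoc, mul_div_assoc, ← mul_add, ← hσθ, mul_one_div_cancel hσ.ne']
  have hσt : σ / t = σ * (1 - θ) / q + (1 / q - 1 / 2) * (2 * (σ * θ / 2)) := by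
    rw [div_eq_mul_one_div, htθ]
    ring
  have S_le : ∑ k, d k ≤ m ^ (σ / t) * (∑ k, d k) ^ (1 - σ / t) := calc
    ∑ k, d k ≤ ∑ k, A k ^ (σ * (1 - θ) / q) * G k ^ (σ * θ / 2) :=
        Finset.sum_le_sum fun k _ =>
          rpow_sum_abs_rpow_le_rpow_mul_rpow hq1 hθ0 hθ1 hσ hσθ ht htθ (X k)
    _ ≤ (∑ k, A k) ^ (σ * (1 - θ) / q) * (∑ k, G k) ^ (σ * θ / 2) :=
        sum_rpow_mul_rpow_le _ hA hG (by positivity) (by positivity) exponents_add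
    _ ≤ m ^ (σ * (1 - θ) / q) *
          (((∑ k, d k) ^ (1 - 1 / q) * m ^ (1 / q - 1 / 2)) ^ 2) ^ (σ * θ / 2) := by
        gcongr
        · exact hX.sum_sum_abs_rpow_le_card hq0.ne'
        · exact hX.sum_weight_sq_mul_sum_sq_le hq1 hq2 hd
    _ = _ := by
        have hq_half : 0 ≤ 1 / q - 1 / 2 := sub_nonneg.2 (by gcongr)
        rw [← rpow_two, ← rpow_mul (by positivity), mul_rpow (by positivity) (by positivity),
          ← rpow_mul hS, ← rpow_mul (by positivity), mul_left_comm,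
          ← rpow_add_of_nonneg (by positivity) (by positivity) (by positivity), ← hσt, mul_comm]
        congr 2
        linear_combination exponents_add + hσt
  exact le_of_le_rpow_mul_rpow_one_sub hS (by positivity) (by positivity) S_le

end IsLpContraction

end LpContraction

lemma eSum_ofReal {p : ℝ} (hp : 0 < p) {ι : Type*} [Fintype ι] {a : ι → ℝ} (ha : ∀ i, 0 ≤ a i) :
    eSum (ENNReal.ofReal p) (fun i => ENNReal.ofReal (a i)) =
      ENNReal.ofReal ((∑ i, a i ^ p) ^ (1 / p)) := by
  have hap (i : ι) : 0 ≤ a i ^ p := Real.rpow_nonneg (ha i) p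
  rw [eSum, if_neg ENNReal.ofReal_ne_top, ENNReal.toReal_ofReal hp.le,
    ← ENNReal.ofReal_rpow_of_nonneg (Finset.sum_nonneg fun i _ => hap i) (by positivity),
    ENNReal.ofReal_sum_of_nonneg fun i _ => hap i]
  simp only [ENNReal.ofReal_rpow_of_nonneg (ha _) hp.le]

section Duality

open Real

variable {ι : Type*} [Fintype ι] {q : ℝ} {q' : ℝ≥0∞}

lemma eq_one_and_eq_top_or_holderConjugate_toReal (hq0 : 0 ≤ q)
    [(ENNReal.ofReal q).HolderConjugate q'] :
    q = 1 ∧ q' = ∞ ∨ q.HolderConjugate q'.toReal := by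
  rcases eq_or_ne q' ∞ with rfl | hq'
  · have hq : ENNReal.ofReal q = 1 :=
      (ENNReal.HolderConjugate.eq_top_iff_eq_one ∞ (ENNReal.ofReal q)).1 rfl
    exact .inl ⟨ENNReal.ofReal_eq_one.1 hq, rfl⟩
  · right
    simpa only [ENNReal.toReal_ofReal hq0] using
      ENNReal.HolderConjugate.toReal_of_ne_top (p := ENNReal.ofReal q) ENNReal.ofReal_ne_top hq'

variable [Fact (1 ≤ q')]

lemma abs_sum_mul_le_mul_norm [(ENNReal.ofReal q).HolderConjugate q'] (hq0 : 0 ≤ q) (c : ι → ℝ)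
    (z : PiLp q' fun _ : ι => ℝ) :
    |∑ j, c j * z j| ≤ (∑ j, |c j| ^ q) ^ (1 / q) * ‖z‖ := by
  have triangle : |∑ j, c j * z j| ≤ ∑ j, |c j| * |z j| := by
    simpa only [abs_mul] using Finset.abs_sum_le_sum_abs (fun j => c j * z j) Finset.univ
  refine triangle.trans ?_
  rcases eq_one_and_eq_top_or_holderConjugate_toReal hq0 (q' := q') with ⟨rfl, rfl⟩ | h
  · simp only [rpow_one, one_div, inv_one, Finset.sum_mul]
    gcongr
    exact PiLp.norm_apply_le z _
  · rw [PiLp.norm_eq_sum h.symm.pos]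
    exact inner_le_Lp_mul_Lq_of_nonneg Finset.univ h (fun j _ => abs_nonneg _)
      (fun j _ => abs_nonneg _)

lemma exists_norm_le_one_sum_mul_eq [(ENNReal.ofReal q).HolderConjugate q'] (hq0 : 0 ≤ q)
    (c : ι → ℝ) :
    ∃ z : PiLp q' fun _ : ι => ℝ, ‖z‖ ≤ 1 ∧ ∑ j, c j * z j = (∑ j, |c j| ^ q) ^ (1 / q) := by
  have abs_sign_le (x : ℝ) : |(SignType.sign x : ℝ)| ≤ 1 := by
    rcases lt_trichotomy x 0 with h | h | h <;> simp [h]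
  rcases eq_one_and_eq_top_or_holderConjugate_toReal hq0 (q' := q') with ⟨rfl, rfl⟩ | h
  · refine ⟨WithLp.toLp ∞ fun j => SignType.sign (c j), ?_, ?_⟩
    · rw [PiLp.norm_toLp, pi_norm_le_iff_of_nonneg zero_le_one]
      exact fun j => abs_sign_le (c j)
    · simp [self_mul_sign]
  · obtain ⟨g, hg, hsum⟩ := (NNReal.isGreatest_Lp Finset.univ (fun j => nnabs (c j)) h).1
    refine ⟨WithLp.toLp q' fun j => SignType.sign (c j) * g j, ?_, ?_⟩
    · have hg' : ∑ j, (g j : ℝ) ^ q'.toReal ≤ 1 := by exact_mod_cast hg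
      rw [PiLp.norm_eq_sum h.symm.pos]
      refine rpow_le_one (by positivity) (le_trans ?_ hg') h.symm.one_div_nonneg
      refine Finset.sum_le_sum fun j _ => rpow_le_rpow (norm_nonneg _) ?_ h.symm.nonneg
      simpa using mul_le_of_le_one_left (g j).2 (abs_sign_le (c j))
    · simp only [← mul_assoc, self_mul_sign]
      simpa using congrArg ((↑) : ℝ≥0 → ℝ) hsum

/-- The functional `z ↦ ∑ j, c j * z j` on `ℓ_r^ι` given by the coefficient vector `c`. -/
def lpFunctional (r : ℝ≥0∞) [Fact (1 ≤ r)] (c : ι → ℝ) : (PiLp r fun _ : ι => ℝ) →L[ℝ] ℝ :=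
  ∑ j, c j • PiLp.proj r (fun _ => ℝ) j

lemma lpFunctional_apply (r : ℝ≥0∞) [Fact (1 ≤ r)] (c : ι → ℝ) (z : PiLp r fun _ : ι => ℝ) :
    lpFunctional r c z = ∑ j, c j * z j := by
  simp [lpFunctional]

lemma exists_lpFunctional_eq {r : ℝ≥0∞} [Fact (1 ≤ r)] (φ : (PiLp r fun _ : ι => ℝ) →L[ℝ] ℝ) :
    ∃ c, lpFunctional r c = φ := by
  classical
  refine ⟨fun j => φ (PiLp.single r j 1), ?_⟩
  ext z
  have hz : z = ∑ j, z j • PiLp.single r j (1 : ℝ) := by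
    ext i
    simp [Pi.single_apply]
  conv_rhs => rw [hz]
  simp [lpFunctional_apply, mul_comm]

lemma norm_lpFunctional_rpow [(ENNReal.ofReal q).HolderConjugate q'] (hq0 : 0 < q) (c : ι → ℝ) :
    ‖lpFunctional q' c‖ ^ q = ∑ j, |c j| ^ q := by
  have hsum : 0 ≤ ∑ j, |c j| ^ q := Finset.sum_nonneg fun j _ => by positivity
  suffices ‖lpFunctional q' c‖ = (∑ j, |c j| ^ q) ^ (1 / q) by
    rw [this, one_div, rpow_inv_rpow hsum hq0.ne']
  apply le_antisymm
  · refine (lpFunctional q' c).opNorm_le_bound (by positivity) fun z => ?_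
    rw [lpFunctional_apply]
    exact abs_sum_mul_le_mul_norm hq0.le c z
  · obtain ⟨z, hz, hcz⟩ := exists_norm_le_one_sum_mul_eq (q' := q') hq0.le c
    rw [← hcz, ← lpFunctional_apply]
    exact (le_abs_self _).trans ((lpFunctional q' c).unit_le_opNorm z hz)

end Duality

section SummingNorms

open Real
open scoped Matrix

variable {X Y : Type*} [NormedAddCommGroup X] [NormedSpace ℝ X] [NormedAddCommGroup Y]
  [NormedSpace ℝ Y] {p q t : ℝ}

lemma weakLq_le_one_iff (hq : 0 < q) {k : ℕ} (x : Fin k → X) :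
    weakLq (ENNReal.ofReal q) x ≤ 1 ↔ ∀ φ : X →L[ℝ] ℝ, ∑ i, |φ (x i)| ^ q ≤ ‖φ‖ ^ q := by
  have unit_ball_iff : weakLq (ENNReal.ofReal q) x ≤ 1 ↔
      ∀ φ : X →L[ℝ] ℝ, ‖φ‖ ≤ 1 → ∑ i, |φ (x i)| ^ q ≤ 1 := by
    have hsum (φ : X →L[ℝ] ℝ) : 0 ≤ ∑ i, |φ (x i)| ^ q := Finset.sum_nonneg fun i _ => by positivity
    simp only [weakLq, iSup_le_iff, Subtype.forall, eSum_ofReal hq fun _ => abs_nonneg _,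
      ENNReal.ofReal_le_one, one_div, rpow_inv_le_iff_of_pos (hsum _) zero_le_one hq, one_rpow]
  rw [unit_ball_iff]
  refine ⟨fun h φ => ?_, fun h φ hφ => (h φ).trans (rpow_le_one (norm_nonneg φ) hφ hq.le)⟩
  rcases eq_or_ne φ 0 with rfl | hφ
  · simp [zero_rpow hq.ne']
  have hnorm : 0 < ‖φ‖ := norm_pos_iff.2 hφ
  have := h (‖φ‖⁻¹ • φ) (by rw [norm_smul, norm_inv, norm_norm, inv_mul_cancel₀ hnorm.ne'])
  simpa only [smul_apply, smul_eq_mul, abs_mul, abs_inv, abs_norm,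
    mul_rpow (inv_nonneg.2 hnorm.le) (abs_nonneg _), ← Finset.mul_sum, inv_rpow hnorm.le,
    inv_mul_le_one₀ (rpow_pos_of_pos hnorm q)] using this

lemma weakLq_le_one_iff_isLpContraction {ι : Type*} [Fintype ι] {q' : ℝ≥0∞} [Fact (1 ≤ q')]
    [(ENNReal.ofReal q).HolderConjugate q'] (hq : 0 < q) {k : ℕ}
    (x : Fin k → PiLp q' fun _ : ι => ℝ) :
    weakLq (ENNReal.ofReal q) x ≤ 1 ↔ IsLpContraction q (.of fun i => x i) := by
  have mulVec_eq (c : ι → ℝ) (i : Fin k) :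
      (Matrix.of (fun i => x i) *ᵥ c) i = lpFunctional q' c (x i) := by
    simp [Matrix.mulVec, dotProduct, lpFunctional_apply, mul_comm]
  rw [weakLq_le_one_iff hq]
  refine ⟨fun h c => ?_, fun h φ => ?_⟩
  · simpa only [mulVec_eq, norm_lpFunctional_rpow hq] using h (lpFunctional q' c)
  · obtain ⟨c, rfl⟩ := exists_lpFunctional_eq φ
    simpa only [mulVec_eq, norm_lpFunctional_rpow hq] using h c

lemma eSum_norm_le_piN (p : ℝ≥0∞) {r : ℝ≥0∞} {k : ℕ} {x : Fin k → X} (T : X →L[ℝ] Y)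
    (hx : weakLq r x ≤ 1) : eSum p (fun i => ENNReal.ofReal ‖T (x i)‖) ≤ piN p r k T :=
  le_iSup (fun x : {x : Fin k → X // weakLq r x ≤ 1} =>
    eSum p fun i => ENNReal.ofReal ‖T (x.1 i)‖) ⟨x, hx⟩

lemma piN_le_ofReal_mul_piN (hp : 0 < p) (hpt : p ≤ t) (r : ℝ≥0∞) (k : ℕ) (T : X →L[ℝ] Y) :
    piN (ENNReal.ofReal p) r k T ≤
      ENNReal.ofReal ((k : ℝ) ^ (1 / p - 1 / t)) * piN (ENNReal.ofReal t) r k T := by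
  refine iSup_le fun x => ?_
  refine le_trans ?_ (mul_le_mul_right (le_iSup _ x) _)
  rw [eSum_ofReal hp fun _ => norm_nonneg _, eSum_ofReal (hp.trans_le hpt) fun _ => norm_nonneg _,
    ← ENNReal.ofReal_mul (by positivity)]
  refine ENNReal.ofReal_le_ofReal ?_
  simpa using rpow_sum_rpow_le_card_rpow_mul hp hpt fun i => norm_nonneg (T (x.1 i))

variable {κ : Type*} [Fintype κ] {q' : ℝ≥0∞} [Fact (1 ≤ q')]

lemma ofReal_sum_norm_single_rpow_le_piPQ [(ENNReal.ofReal q).HolderConjugate q'] (hq : 0 < q)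
    (hp : 0 < p) {m : ℕ} (T : (PiLp q' fun _ : Fin m => ℝ) →L[ℝ] Y) :
    ENNReal.ofReal ((∑ j, ‖T (PiLp.single q' j 1)‖ ^ p) ^ (1 / p)) ≤
      piPQ (ENNReal.ofReal p) (ENNReal.ofReal q) T := by
  have weak : weakLq (ENNReal.ofReal q) (fun j : Fin m => PiLp.single q' j (1 : ℝ)) ≤ 1 := by
    rw [weakLq_le_one_iff_isLpContraction hq]
    convert isLpContraction_one (ι := Fin m) q
    ext i j
    simp [Matrix.one_apply, Pi.single_apply, eq_comm]
  rw [← eSum_ofReal hp fun j => norm_nonneg _]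
  exact (eSum_norm_le_piN _ T weak).trans (le_iSup (fun n => piN _ _ n T) m)

lemma piN_le_ofReal_mul_card_rpow [(ENNReal.ofReal q).HolderConjugate q'] {θ σ C : ℝ}
    (hq1 : 1 ≤ q) (hq2 : q ≤ 2) (hθ0 : 0 ≤ θ) (hθ1 : θ ≤ 1) (hσ : 0 < σ)
    (hσθ : 1 / σ = (1 - θ) / q + θ / 2) (ht : 0 < t) (htθ : 1 / t = 1 / q - θ / 2)
    (hC : 0 ≤ C) {T : (PiLp q' fun _ : κ => ℝ) →L[ℝ] Y}
    (hT : ∀ z, ‖T z‖ ≤ C * (∑ j, |z j| ^ σ) ^ (1 / σ)) (k : ℕ) :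
    piN (ENNReal.ofReal t) (ENNReal.ofReal q) k T ≤
      ENNReal.ofReal (C * (Fintype.card κ : ℝ) ^ (1 / t)) := by
  refine iSup_le fun ⟨x, hx⟩ => ?_
  rw [weakLq_le_one_iff_isLpContraction (by linarith)] at hx
  rw [eSum_ofReal ht fun _ => norm_nonneg _]
  have norm_rpow_le (i : Fin k) : ‖T (x i)‖ ^ t ≤ C ^ t * (∑ j, |x i j| ^ σ) ^ (t / σ) := by
    have hsum : 0 ≤ ∑ j, |x i j| ^ σ := Finset.sum_nonneg fun j _ => by positivity
    calc ‖T (x i)‖ ^ t ≤ (C * (∑ j, |x i j| ^ σ) ^ (1 / σ)) ^ t := by gcongr; exact hT _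
      _ = C ^ t * (∑ j, |x i j| ^ σ) ^ (t / σ) := by
        rw [mul_rpow hC (by positivity), ← rpow_mul hsum, one_div_mul_eq_div]
  have sum_le : ∑ i, ‖T (x i)‖ ^ t ≤ C ^ t * Fintype.card κ := by
    refine (Finset.sum_le_sum fun i _ => norm_rpow_le i).trans ?_
    rw [← Finset.mul_sum]
    gcongr
    exact hx.sum_rpow_sum_abs_rpow_le_card hq1 hq2 hθ0 hθ1 hσ hσθ ht htθ
  refine ENNReal.ofReal_le_ofReal ?_
  calc (∑ i, ‖T (x i)‖ ^ t) ^ (1 / t) ≤ (C ^ t * Fintype.card κ) ^ (1 / t) := by gcongr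
    _ = C * (Fintype.card κ : ℝ) ^ (1 / t) := by
      rw [mul_rpow (by positivity) (by positivity), one_div, rpow_rpow_inv hC ht.ne']

end SummingNorms

lemma rpow_sub_mul_floor_rpow_le {R x a b : ℝ} (hR : 1 ≤ R) (hx : 0 ≤ x) (hba : b ≤ a)
    (hab : a ≤ b + 1) :
    x ^ (a - b) * (⌊R⌋₊ : ℝ) ^ b ≤ 2 * (x / R) ^ (a - b) * (⌊R⌋₊ : ℝ) ^ a := by
  have hR0 : 0 < R := by linarith
  have hm : 0 < (⌊R⌋₊ : ℝ) := Nat.cast_pos.2 (Nat.floor_pos.2 hR)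
  have hRm : R ≤ 2 * ⌊R⌋₊ := by
    have : (1 : ℝ) ≤ ⌊R⌋₊ := Nat.one_le_cast.2 (Nat.floor_pos.2 hR)
    linarith [Nat.lt_floor_add_one R]
  have rpow_le : R ^ (a - b) ≤ 2 * (⌊R⌋₊ : ℝ) ^ (a - b) :=
    calc R ^ (a - b) ≤ (2 * (⌊R⌋₊ : ℝ)) ^ (a - b) := by gcongr
      _ = 2 ^ (a - b) * (⌊R⌋₊ : ℝ) ^ (a - b) := Real.mul_rpow zero_le_two hm.le
      _ ≤ 2 * (⌊R⌋₊ : ℝ) ^ (a - b) := by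
        gcongr
        exact Real.rpow_le_self_of_one_le one_le_two (by linarith)
  calc x ^ (a - b) * (⌊R⌋₊ : ℝ) ^ b = (x / R) ^ (a - b) * R ^ (a - b) * (⌊R⌋₊ : ℝ) ^ b := by
        rw [← Real.mul_rpow (by positivity) hR0.le, div_mul_cancel₀ _ hR0.ne']
    _ ≤ (x / R) ^ (a - b) * (2 * (⌊R⌋₊ : ℝ) ^ (a - b)) * (⌊R⌋₊ : ℝ) ^ b := by gcongr
    _ = 2 * (x / R) ^ (a - b) * ((⌊R⌋₊ : ℝ) ^ (a - b) * (⌊R⌋₊ : ℝ) ^ b) := by ring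
    _ = 2 * (x / R) ^ (a - b) * (⌊R⌋₊ : ℝ) ^ a := by rw [← Real.rpow_add hm, sub_add_cancel]

section TransposedOperator

open Real
open scoped Matrix

variable {ι κ : Type*} [Fintype ι] [Fintype κ] [DecidableEq κ] {r : ℝ≥0∞} [Fact (1 ≤ r)]

lemma norm_lpOperator_transpose_le [DecidableEq ι] {σ : ℝ} {s : ℝ≥0∞} [Fact (1 ≤ s)]
    [(ENNReal.ofReal σ).HolderConjugate s] (hσ : 0 ≤ σ) (A : Matrix κ ι ℝ)
    (z : PiLp r fun _ : κ => ℝ) :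
    ‖lpOperator r 2 Aᵀ z‖ ≤ ‖lpOperator 2 s A‖ * (∑ j, |z j| ^ σ) ^ (1 / σ) := by
  set y := lpOperator r 2 Aᵀ z with hy
  rcases (norm_nonneg y).eq_or_lt with hy0 | hy0
  · rw [← hy0]
    positivity
  have norm_sq : ‖y‖ ^ 2 = ∑ j, z j * lpOperator 2 s A y j := by
    simp only [EuclideanSpace.real_norm_sq_eq, lpOperator_apply, Finset.mul_sum]
    rw [Finset.sum_comm]
    refine Finset.sum_congr rfl fun i _ => ?_
    rw [sq]
    nth_rewrite 1 [hy]
    rw [lpOperator_apply, Finset.sum_mul]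
    exact Finset.sum_congr rfl fun j _ => by rw [Matrix.transpose_apply]; ring
  refine le_of_mul_le_mul_right ?_ hy0
  calc ‖y‖ * ‖y‖ = ∑ j, z j * lpOperator 2 s A y j := by rw [← norm_sq, sq]
    _ ≤ (∑ j, |z j| ^ σ) ^ (1 / σ) * ‖lpOperator 2 s A y‖ :=
      (le_abs_self _).trans (abs_sum_mul_le_mul_norm hσ _ _)
    _ ≤ (∑ j, |z j| ^ σ) ^ (1 / σ) * (‖lpOperator 2 s A‖ * ‖y‖) := by
      gcongr
      exact (lpOperator 2 s A).le_opNorm y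
    _ = ‖lpOperator 2 s A‖ * (∑ j, |z j| ^ σ) ^ (1 / σ) * ‖y‖ := by ring

lemma norm_lpOperator_transpose_single {A : Matrix κ ι ℝ} (hA : ∀ j i, |A j i| = 1) (j : κ) :
    ‖lpOperator r 2 Aᵀ (PiLp.single r j 1)‖ = √(Fintype.card ι) := by
  have apply_eq (i : ι) : lpOperator r 2 Aᵀ (PiLp.single r j 1) i = A j i := by
    simp [lpOperator_apply]
  rw [EuclideanSpace.norm_eq]
  simp [apply_eq, hA]

lemma ofReal_rpow_mul_sqrt_le_piPQ_lpOperator_transpose {p q : ℝ}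
    [(ENNReal.ofReal q).HolderConjugate r] (hq : 0 < q) (hp : 0 < p) {m : ℕ}
    {A : Matrix (Fin m) ι ℝ} (hA : ∀ j i, |A j i| = 1) :
    ENNReal.ofReal ((m : ℝ) ^ (1 / p) * √(Fintype.card ι)) ≤
      piPQ (ENNReal.ofReal p) (ENNReal.ofReal q) (lpOperator r 2 Aᵀ) := by
  have h := ofReal_sum_norm_single_rpow_le_piPQ hq hp (lpOperator r 2 Aᵀ)
  simp only [norm_lpOperator_transpose_single hA, Finset.sum_const, Finset.card_univ,
    Fintype.card_fin, nsmul_eq_mul] at h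
  rwa [mul_rpow m.cast_nonneg (by positivity), one_div, rpow_rpow_inv (sqrt_nonneg _) hp.ne',
    ← one_div] at h

lemma toReal_one_div_of_holderConjugate {q : ℝ} (hq : 0 < q)
    [(ENNReal.ofReal q).HolderConjugate r] : (1 / r).toReal = 1 - 1 / q := by
  rcases eq_one_and_eq_top_or_holderConjugate_toReal (q := q) (q' := r) hq.le with
    ⟨rfl, rfl⟩ | h
  · simp
  · rw [one_div, ENNReal.toReal_inv, one_div, h.one_sub_inv]

lemma piN_lpOperator_transpose_le [DecidableEq ι] {θ p q s t : ℝ}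
    [(ENNReal.ofReal q).HolderConjugate r] [Fact (1 ≤ ENNReal.ofReal s)] (hθ0 : 0 ≤ θ)
    (hθ1 : θ ≤ 1) (hq1 : 1 ≤ q) (hq2 : q ≤ 2) (hs : 1 < s)
    (hsθ : 1 / s = (1 - θ) * (1 / r).toReal + θ / 2) (hp : 0 < p) (hpt : p ≤ t)
    (htθ : 1 / t = 1 / q - θ / 2) (A : Matrix κ ι ℝ) (k : ℕ) :
    piN (ENNReal.ofReal p) (ENNReal.ofReal q) k (lpOperator r 2 Aᵀ) ≤
      ENNReal.ofReal ((k : ℝ) ^ (1 / p - 1 / t) *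
        (‖lpOperator 2 (ENNReal.ofReal s) A‖ * (Fintype.card κ : ℝ) ^ (1 / t))) := by
  have hσ : s.conjExponent.HolderConjugate s := (Real.HolderConjugate.conjExponent hs).symm
  have := hσ.ennrealOfReal
  have hσθ : 1 / s.conjExponent = (1 - θ) / q + θ / 2 := by
    rw [one_div, ← hσ.symm.one_sub_inv, ← one_div, hsθ,
      toReal_one_div_of_holderConjugate (by linarith : 0 < q)]
    ring
  rw [ENNReal.ofReal_mul (by positivity)]
  refine (piN_le_ofReal_mul_piN hp hpt _ k _).trans (mul_le_mul_right ?_ _)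
  exact piN_le_ofReal_mul_card_rpow hq1 hq2 hθ0 hθ1 hσ.pos hσθ (hp.trans_le hpt) htθ
    (norm_nonneg _) (norm_lpOperator_transpose_le hσ.nonneg A) k

theorem piN_lpOperator_transpose_le_mul_piPQ [DecidableEq ι] {θ p q s t C R : ℝ}
    [(ENNReal.ofReal q).HolderConjugate r] [Fact (1 ≤ ENNReal.ofReal s)] (hθ0 : 0 ≤ θ)
    (hθ1 : θ ≤ 1) (hq1 : 1 ≤ q) (hq2 : q ≤ 2) (hs : 1 < s)
    (hsθ : 1 / s = (1 - θ) * (1 / r).toReal + θ / 2) (hp : 1 ≤ p) (hpt : p ≤ t)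
    (htθ : 1 / t = 1 / q - θ / 2) (hR : 1 ≤ R) {A : Matrix (Fin ⌊R⌋₊) ι ℝ}
    (hA : ∀ j i, |A j i| = 1) (hC : 0 ≤ C)
    (hA_norm : ‖lpOperator 2 (ENNReal.ofReal s) A‖ ≤ C * √(Fintype.card ι)) (k : ℕ) :
    piN (ENNReal.ofReal p) (ENNReal.ofReal q) k (lpOperator r 2 Aᵀ) ≤
      ENNReal.ofReal (2 * C * (k / R) ^ (1 / p - 1 / t)) *
        piPQ (ENNReal.ofReal p) (ENNReal.ofReal q) (lpOperator r 2 Aᵀ) := by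
  have hp0 : 0 < p := by linarith
  have : 0 < t := by linarith
  have : 0 < R := by linarith
  have one_div_p_le : 1 / p ≤ 1 / t + 1 :=
    ((div_le_one hp0).2 hp).trans (le_add_of_nonneg_left (by positivity))
  have upper := piN_lpOperator_transpose_le hθ0 hθ1 hq1 hq2 hs hsθ hp0 hpt htθ A k
  have lower := ofReal_rpow_mul_sqrt_le_piPQ_lpOperator_transpose (r := r) (q := q)
    (by linarith) hp0 hA
  refine upper.trans (le_trans ?_ (mul_le_mul_right lower _))
  rw [← ENNReal.ofReal_mul (by positivity), Fintype.card_fin]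
  refine ENNReal.ofReal_le_ofReal ?_
  calc (k : ℝ) ^ (1 / p - 1 / t) *
        (‖lpOperator 2 (ENNReal.ofReal s) A‖ * (⌊R⌋₊ : ℝ) ^ (1 / t))
    _ ≤ (k : ℝ) ^ (1 / p - 1 / t) * (C * √(Fintype.card ι) * (⌊R⌋₊ : ℝ) ^ (1 / t)) := by gcongr
    _ = C * √(Fintype.card ι) * ((k : ℝ) ^ (1 / p - 1 / t) * (⌊R⌋₊ : ℝ) ^ (1 / t)) := by ring
    _ ≤ C * √(Fintype.card ι) * (2 * (k / R) ^ (1 / p - 1 / t) * (⌊R⌋₊ : ℝ) ^ (1 / p)) := by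
      gcongr _ * ?_
      exact rpow_sub_mul_floor_rpow_le hR k.cast_nonneg (by gcongr) one_div_p_le
    _ = 2 * C * (k / R) ^ (1 / p - 1 / t) * ((⌊R⌋₊ : ℝ) ^ (1 / p) * √(Fintype.card ι)) := by
      ring

end TransposedOperator

/-- for `0 < θ < 1`, `1 ≤ q ≤ 2 ≤ s` and `t ≥ q` with
`1/s = (1-θ)/q' + θ/2` and `1/t = 1/q - θ/2`, there is an absolute constant
`c₀` such that for every `n ≥ 1` there is an operator
`T : ℓ_{q'}^{⌊n^{s/2}⌋} → ℓ_2^n` with `π_{p,q}(T) > 0` and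
`π_{p,q}^k(T) ≤ c₀ √s (k/n^{s/2})^{1/p - 1/t} π_{p,q}(T)` for all `q ≤ p ≤ t`
and all `k`. -/
theorem statement16 :
    ∃ c₀ : ℝ, 0 < c₀ ∧
      ∀ (θ q s t : ℝ) (q' : ℝ≥0∞), 0 < θ → θ < 1 → 1 ≤ q → q ≤ 2 →
        1 / ENNReal.ofReal q + 1 / q' = 1 → ∀ (hq' : 1 ≤ q'), 2 ≤ s →
        1 / s = (1 - θ) * (1 / q').toReal + θ / 2 → q ≤ t → 1 / t = 1 / q - θ / 2 →
        ∀ n : ℕ, 0 < n →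
          haveI : Fact (1 ≤ q') := ⟨hq'⟩
          ∃ T : PiLp q' (fun _ : Fin ⌊(n : ℝ) ^ (s / 2)⌋₊ => ℝ) →L[ℝ]
              EuclideanSpace ℝ (Fin n),
            ∀ p : ℝ, q ≤ p → p ≤ t →
              0 < piPQ (ENNReal.ofReal p) (ENNReal.ofReal q) T ∧
              ∀ k : ℕ,
                piN (ENNReal.ofReal p) (ENNReal.ofReal q) k T ≤
                  ENNReal.ofReal (c₀ * Real.sqrt s *
                      ((k : ℝ) / (n : ℝ) ^ (s / 2)) ^ (1 / p - 1 / t)) *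
                    piPQ (ENNReal.ofReal p) (ENNReal.ofReal q) T := by
  refine ⟨2 * 10, by norm_num, fun θ q s t q' hθ0 hθ1 hq1 hq2 hqq' hq' hs hsθ _ htθ n hn => ?_⟩
  have : Fact (1 ≤ q') := ⟨hq'⟩
  have : Fact (1 ≤ ENNReal.ofReal s) := ⟨ENNReal.one_le_ofReal.2 (by linarith)⟩
  have : (ENNReal.ofReal q).HolderConjugate q' :=
    ENNReal.holderConjugate_iff.2 (by simpa only [one_div] using hqq')
  have : Nonempty (Fin n) := ⟨⟨0, hn⟩⟩
  have hR : 1 ≤ (n : ℝ) ^ (s / 2) := Real.one_le_rpow (Nat.one_le_cast.2 hn) (by linarith)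
  have hm : 0 < (⌊(n : ℝ) ^ (s / 2)⌋₊ : ℝ) := Nat.cast_pos.2 (Nat.floor_pos.2 hR)
  obtain ⟨A, hA_sign, hA_norm⟩ :=
    exists_sign_matrix_norm_lpOperator_le (κ := Fin ⌊(n : ℝ) ^ (s / 2)⌋₊) (ι := Fin n) hs
      (by simpa using Nat.floor_le (zero_le_one.trans hR))
  rw [Real.sqrt_mul (by linarith), ← mul_assoc] at hA_norm
  refine ⟨lpOperator q' 2 A.transpose, fun p hqp hpt => ?_⟩
  have hp : 1 ≤ p := hq1.trans hqp
  have lower := ofReal_rpow_mul_sqrt_le_piPQ_lpOperator_transpose (r := q')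
    (zero_lt_one.trans_le hq1) (zero_lt_one.trans_le hp) hA_sign
  rw [Fintype.card_fin] at lower
  refine ⟨(ENNReal.ofReal_pos.2 (by positivity)).trans_le lower, fun k => ?_⟩
  rw [mul_assoc 2]
  exact piN_lpOperator_transpose_le_mul_piPQ hθ0.le hθ1.le hq1 hq2 (by linarith) hsθ hp hpt htθ hR
    hA_sign (by positivity) hA_norm k

end
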